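/- arXiv:2103.08631 — 2 statements merged into one kernel-verified Lean document; each statement's English description precedes it below -/
import Mathlib

section
/- Let X, Y, Z denote the 2×2 Pauli matrices, I the 2×2 identity, and ⊗ the Kronecker product. Set A₁ = I⊗X⊗Z⊗Z⊗X, A₂ = I⊗Y⊗X⊗X⊗Y, A₃ = I⊗Z⊗Y⊗Y⊗Z, B = I⊗I⊗Y⊗Z⊗Y, and for i ∈ {1,…,5} let Z_i be the 5-fold Kronecker product with Z in the i-th factor and I elsewhere. Then: (a) for each i ∈ {2,3,4,5}, at least one of A₁, A₂, A₃ anticommutes with Z_i; (b) for every pair 2 ≤ i < j ≤ 5 with (i,j) ∉ {(2,5),(3,4)}, at least one of A₁, A₂, A₃ anticommutes with Z_i·Z_j; and (c) B anticommutes with Z₂·Z₅ and with Z₃·Z₄. -/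
open Matrix

noncomputable section

/-- Pauli X. -/
def pX : Matrix (Fin 2) (Fin 2) ℂ := !![0, 1; 1, 0]
/-- Pauli Y. -/
def pY : Matrix (Fin 2) (Fin 2) ℂ := !![0, -Complex.I; Complex.I, 0]
/-- Pauli Z. -/
def pZ : Matrix (Fin 2) (Fin 2) ℂ := !![1, 0; 0, -1]

/-- The 5-fold tensor (Kronecker) product `P₁ ⊗ P₂ ⊗ P₃ ⊗ P₄ ⊗ P₅`, realized as a
`32 × 32` matrix on `(ℂ²)^⊗5` with index set `Fin 5 → Fin 2`. -/
def tp5 (P : Fin 5 → Matrix (Fin 2) (Fin 2) ℂ) :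
    Matrix (Fin 5 → Fin 2) (Fin 5 → Fin 2) ℂ :=
  fun x y => ∏ i, P i (x i) (y i)

def A1 : Matrix (Fin 5 → Fin 2) (Fin 5 → Fin 2) ℂ := tp5 ![1, pX, pZ, pZ, pX]
def A2 : Matrix (Fin 5 → Fin 2) (Fin 5 → Fin 2) ℂ := tp5 ![1, pY, pX, pX, pY]
def A3 : Matrix (Fin 5 → Fin 2) (Fin 5 → Fin 2) ℂ := tp5 ![1, pZ, pY, pY, pZ]
def B : Matrix (Fin 5 → Fin 2) (Fin 5 → Fin 2) ℂ := tp5 ![1, 1, pY, pZ, pY]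

/-- Pauli `Z` acting on the `i`-th qubit (0-indexed; the paper's `Z_{i+1}`) and the
identity elsewhere. -/
def Zon (i : Fin 5) : Matrix (Fin 5 → Fin 2) (Fin 5 → Fin 2) ℂ :=
  tp5 (fun j => if j = i then pZ else 1)

theorem tp5_mul (P Q : Fin 5 → Matrix (Fin 2) (Fin 2) ℂ) :
    tp5 P * tp5 Q = tp5 (fun i => P i * Q i) := by
  ext x y
  simp only [tp5, Matrix.mul_apply, ← Finset.prod_mul_distrib]
  rw [Finset.prod_univ_sum, Fintype.piFinset_univ]

theorem tp5_smul (c : Fin 5 → ℂ) (P : Fin 5 → Matrix (Fin 2) (Fin 2) ℂ) :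
    tp5 (fun i => c i • P i) = (∏ i, c i) • tp5 P := by
  ext x y
  simp [tp5, Finset.prod_mul_distrib]

/-- If the `i`-th factor commutes with `Z` up to the scalar `s`, so does the product. -/
theorem tp5_Zon (P : Fin 5 → Matrix (Fin 2) (Fin 2) ℂ) (i : Fin 5) (s : ℂ)
    (h : P i * pZ = s • (pZ * P i)) : tp5 P * Zon i = s • (Zon i * tp5 P) := by
  have hs : (∏ j : Fin 5, if j = i then s else 1) = s := by simp
  rw [Zon, tp5_mul, tp5_mul, ← hs, ← tp5_smul]
  congr 1
  funext j
  by_cases hj : j = i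
  · subst hj; simpa using h
  · simp [hj]

theorem tp5_Zon_two (P : Fin 5 → Matrix (Fin 2) (Fin 2) ℂ) (i j : Fin 5) (s t : ℂ)
    (hi : P i * pZ = s • (pZ * P i)) (hj : P j * pZ = t • (pZ * P j)) (hst : s * t = -1) :
    tp5 P * (Zon i * Zon j) = -((Zon i * Zon j) * tp5 P) := by
  rw [← mul_assoc, tp5_Zon P i s hi, smul_mul_assoc, mul_assoc, tp5_Zon P j t hj,
    mul_smul_comm, smul_smul, hst, neg_one_smul, mul_assoc]

theorem tp5_Zon_one (P : Fin 5 → Matrix (Fin 2) (Fin 2) ℂ) (i : Fin 5)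
    (h : P i * pZ = (-1 : ℂ) • (pZ * P i)) : tp5 P * Zon i = -(Zon i * tp5 P) := by
  rw [tp5_Zon P i (-1) h, neg_one_smul]

theorem pX_pZ : pX * pZ = (-1 : ℂ) • (pZ * pX) := by
  ext a b; fin_cases a <;> fin_cases b <;> simp [pX, pZ]

theorem pY_pZ : pY * pZ = (-1 : ℂ) • (pZ * pY) := by
  ext a b; fin_cases a <;> fin_cases b <;> simp [pY, pZ]

theorem pZ_pZ : pZ * pZ = (1 : ℂ) • (pZ * pZ) := (one_smul _ _).symm

theorem one_pZ : (1 : Matrix (Fin 2) (Fin 2) ℂ) * pZ = (1 : ℂ) • (pZ * 1) := by simp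

/-- qubits here are 0-indexed, so the paper's sites `2,…,5` are `1,…,4`:
(a) each single-`Z` error on qubits `2..5` anticommutes with one of `A₁,A₂,A₃`;
(b) each weight-2 `Z`-error `Z_iZ_j` on qubits `2..5` with `(i,j) ∉ {(2,5),(3,4)}`
anticommutes with one of `A₁,A₂,A₃`; (c) `B` anticommutes with `Z₂Z₅` and `Z₃Z₄`. -/
theorem stmt6 :
    (∀ i : Fin 5, i ≠ 0 →
      ∃ A ∈ ({A1, A2, A3} : Set (Matrix (Fin 5 → Fin 2) (Fin 5 → Fin 2) ℂ)),
        A * Zon i = -(Zon i * A))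
    ∧ (∀ i j : Fin 5, 0 < i → i < j →
        ¬((i = 1 ∧ j = 4) ∨ (i = 2 ∧ j = 3)) →
      ∃ A ∈ ({A1, A2, A3} : Set (Matrix (Fin 5 → Fin 2) (Fin 5 → Fin 2) ℂ)),
        A * (Zon i * Zon j) = -((Zon i * Zon j) * A))
    ∧ B * (Zon 1 * Zon 4) = -((Zon 1 * Zon 4) * B)
    ∧ B * (Zon 2 * Zon 3) = -((Zon 2 * Zon 3) * B) := by
  refine ⟨?_, ?_, ?_, ?_⟩
  · intro i hi
    fin_cases i
    · exact absurd rfl hi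
    · exact ⟨A1, by simp, tp5_Zon_one _ 1 pX_pZ⟩
    · exact ⟨A2, by simp, tp5_Zon_one _ 2 pX_pZ⟩
    · exact ⟨A2, by simp, tp5_Zon_one _ 3 pX_pZ⟩
    · exact ⟨A1, by simp, tp5_Zon_one _ 4 pX_pZ⟩
  · intro i j hi hij hn
    have hc : (i = 1 ∧ j = 2) ∨ (i = 1 ∧ j = 3) ∨ (i = 2 ∧ j = 4) ∨ (i = 3 ∧ j = 4) := by
      revert i j; decide
    refine ⟨A1, by simp, ?_⟩
    rcases hc with ⟨rfl, rfl⟩ | ⟨rfl, rfl⟩ | ⟨rfl, rfl⟩ | ⟨rfl, rfl⟩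
    · exact tp5_Zon_two _ 1 2 (-1) 1 pX_pZ pZ_pZ (by norm_num)
    · exact tp5_Zon_two _ 1 3 (-1) 1 pX_pZ pZ_pZ (by norm_num)
    · exact tp5_Zon_two _ 2 4 1 (-1) pZ_pZ pX_pZ (by norm_num)
    · exact tp5_Zon_two _ 3 4 1 (-1) pZ_pZ pX_pZ (by norm_num)
  · exact tp5_Zon_two _ 1 4 1 (-1) one_pZ pY_pZ (by norm_num)
  · exact tp5_Zon_two _ 2 3 (-1) 1 pY_pZ pZ_pZ (by norm_num)
end
end

section
/- Let X, Y, Z denote the 2×2 Pauli matrices, I the 2×2 identity, ⊗ the Kronecker product, g₁ = X⊗Z⊗Z⊗X⊗I, g₂ = I⊗X⊗Z⊗Z⊗X, g₃ = X⊗I⊗X⊗Z⊗Z, g₄ = Z⊗X⊗I⊗X⊗Z, Z̄ = Z⊗Z⊗Z⊗Z⊗Z, and let v ∈ (ℂ²)^⊗5 be a unit vector with gᵢ v = v for i = 1,…,4 and Z̄ v = v (a logical-zero state of the five-qubit code). Let θ ∈ ℝ and let (s_{ij})_{i≠j, i,j ∈ {1,…,5}} be real numbers with cos²θ + Σ_{i≠j}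 s_{ij}² = 1. Define the vector Ψ = cosθ·(v ⊗ v) + Σ_{i≠j} s_{ij}·(Z_i v) ⊗ (Z_j v) in (ℂ²)^⊗5 ⊗ (ℂ²)^⊗5, where Z_i is the 5-fold Kronecker product with Z in the i-th factor and I elsewhere. Then Ψ is a unit vector, and for every k ∈ {1,…,5} and every 4×4 complex matrix M, inserting M on the pair of qubits (qubit k of the first five-qubit register, qubit k of the second register) with the identity on the remaining eight qubits gives ⟨Ψ, M̃ Ψ⟩ = Tr(M)/4, where M̃ denotes this insertion. That is, the reduced density matrix of Ψ on each of the five dimension-4 legs is maximally mixed, so Ψ is a 1-isometric tensor defining a [[5,0,2]]₄ code. -/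
open Matrix

noncomputable section

/-- The four stabilizer generators of the five-qubit perfect code. -/
def gs : Fin 4 → Matrix (Fin 5 → Fin 2) (Fin 5 → Fin 2) ℂ :=
  ![tp5 ![pX, pZ, pZ, pX, 1], tp5 ![1, pX, pZ, pZ, pX],
    tp5 ![pX, 1, pX, pZ, pZ], tp5 ![pZ, pX, 1, pX, pZ]]

/-- The logical operator `Z̄ = Z⊗Z⊗Z⊗Z⊗Z`. -/
def Zbar : Matrix (Fin 5 → Fin 2) (Fin 5 → Fin 2) ℂ := tp5 ![pZ, pZ, pZ, pZ, pZ]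

/-- The tensor product of two vectors of `(ℂ²)^⊗5`, as a vector of
`(ℂ²)^⊗5 ⊗ (ℂ²)^⊗5`. -/
def vtens (v w : (Fin 5 → Fin 2) → ℂ) :
    (Fin 5 → Fin 2) × (Fin 5 → Fin 2) → ℂ :=
  fun p => v p.1 * w p.2

/-- The insertion of a `4×4` matrix `M` on the `k`-th dimension-4 leg, i.e. on the
pair (qubit `k` of the first five-qubit register, qubit `k` of the second register),
with the identity on the remaining eight qubits. -/
def legIns (k : Fin 5) (M : Matrix (Fin 2 × Fin 2) (Fin 2 × Fin 2) ℂ) :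
    Matrix ((Fin 5 → Fin 2) × (Fin 5 → Fin 2))
      ((Fin 5 → Fin 2) × (Fin 5 → Fin 2)) ℂ :=
  fun p q => M (p.1 k, p.2 k) (q.1 k, q.2 k)
    * (if ∀ l, l ≠ k → p.1 l = q.1 l ∧ p.2 l = q.2 l then 1 else 0)

/-- Action of a monomial tensor product. -/
lemma tp5_mono (P : Fin 5 → Matrix (Fin 2) (Fin 2) ℂ) (t : Fin 5 → Fin 2)
    (c : Fin 5 → Fin 2 → ℂ) (h : ∀ i a b, P i a b = if b = a + t i then c i a else 0)
    (v : (Fin 5 → Fin 2) → ℂ) (x : Fin 5 → Fin 2) :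
    (tp5 P).mulVec v x = (∏ i, c i (x i)) * v (x + t) := by
  unfold Matrix.mulVec dotProduct
  rw [Finset.sum_eq_single (x + t)]
  · congr 1
    unfold tp5
    refine Finset.prod_congr rfl fun i _ => ?_
    rw [h]; simp
  · intro y _ hy
    obtain ⟨i, hi⟩ := Function.ne_iff.mp hy
    have : tp5 P x y = 0 := by
      unfold tp5
      refine Finset.prod_eq_zero (Finset.mem_univ i) ?_
      rw [h, if_neg]
      simpa using hi
    change tp5 P x y * v y = 0
    rw [this, zero_mul]
  · simp

/-- The sign of a bit. -/
def sg (a : Fin 2) : ℤ := if a = 0 then 1 else -1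

/-- The sign picked up under `Z` on qubit `e` (or no error). -/
def ze (e : Option (Fin 5)) (x : Fin 5 → Fin 2) : ℤ :=
  match e with
  | none => 1
  | some i => sg (x i)

lemma pX_mono (a b : Fin 2) : pX a b = if b = a + 1 then (fun _ => (1:ℂ)) a else 0 := by
  fin_cases a <;> fin_cases b <;> simp [pX]

lemma pZ_mono (a b : Fin 2) : pZ a b = if b = a + 0 then ((sg a : ℤ) : ℂ) else 0 := by
  fin_cases a <;> fin_cases b <;> simp [pZ, sg]

lemma one_mono (a b : Fin 2) :
    (1 : Matrix (Fin 2) (Fin 2) ℂ) a b = if b = a + 0 then (fun _ => (1:ℂ)) a else 0 := by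
  fin_cases a <;> fin_cases b <;> simp

lemma norm_sg (a : Fin 2) : ‖((sg a : ℤ) : ℂ)‖ = 1 := by
  fin_cases a <;> simp [sg]

lemma Zon_apply (i : Fin 5) (v : (Fin 5 → Fin 2) → ℂ) (x : Fin 5 → Fin 2) :
    (Zon i).mulVec v x = ((ze (some i) x : ℤ) : ℂ) * v x := by
  unfold Zon
  rw [tp5_mono _ 0 (fun j a => if j = i then ((sg a : ℤ) : ℂ) else 1)]
  · simp [ze]
  · intro j a b
    by_cases hj : j = i
    · simp only [hj, if_true]; exact pZ_mono a b
    · simp only [hj, if_false]; exact one_mono a b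

/-- bit flip patterns of the generators -/
def tt : Fin 4 → Fin 5 → Fin 2 :=
  ![![1,0,0,1,0], ![0,1,0,0,1], ![1,0,1,0,0], ![0,1,0,1,0]]

/-- signs -/
def sgC (a : Fin 2) : ℂ := ((sg a : ℤ) : ℂ)

/-- constant one -/
def oneC (_ : Fin 2) : ℂ := 1

/-- phases of the generators -/
def cc : Fin 4 → Fin 5 → Fin 2 → ℂ :=
  ![![oneC, sgC, sgC, oneC, oneC], ![oneC, oneC, sgC, sgC, oneC],
    ![oneC, oneC, oneC, sgC, sgC], ![sgC, oneC, oneC, oneC, sgC]]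

lemma norm_cc (i : Fin 4) (j : Fin 5) (a : Fin 2) : ‖cc i j a‖ = 1 := by
  fin_cases i <;> fin_cases j <;> first | exact norm_sg a | exact norm_one

lemma gs_apply (i : Fin 4) (v : (Fin 5 → Fin 2) → ℂ) (x : Fin 5 → Fin 2) :
    (gs i).mulVec v x = (∏ j, cc i j (x j)) * v (x + tt i) := by
  fin_cases i <;>
  · refine tp5_mono _ _ _ ?_ v x
    intro j a b
    fin_cases j <;> first | exact pX_mono a b | exact pZ_mono a b | exact one_mono a b

lemma norm_shift (v : (Fin 5 → Fin 2) → ℂ) (hstab : ∀ i : Fin 4, (gs i).mulVec v = v)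
    (i : Fin 4) (x : Fin 5 → Fin 2) : ‖v (x + tt i)‖ = ‖v x‖ := by
  conv_rhs => rw [← hstab i, gs_apply, norm_mul, norm_prod]
  simp [norm_cc]

/-- parity -/
def par (x : Fin 5 → Fin 2) : Fin 2 := x 0 + x 1 + x 2 + x 3 + x 4

lemma v_odd (v : (Fin 5 → Fin 2) → ℂ) (hZ : Zbar.mulVec v = v) (x : Fin 5 → Fin 2)
    (hx : par x ≠ 0) : v x = 0 := by
  have h : v x = (∏ i, (sgC (x i))) * v (x + 0) := by
    conv_lhs => rw [← hZ]
    refine tp5_mono _ 0 (fun _ => sgC) ?_ v x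
    intro j a b
    fin_cases j <;> exact pZ_mono a b
  have h2 : (∏ i, (sgC (x i))) = -1 := by
    have : ∀ x : Fin 5 → Fin 2, par x ≠ 0 → ∏ i, sg (x i) = -1 := by decide +kernel
    have := this x hx
    unfold sgC
    rw [← Int.cast_prod, this]; simp
  rw [h2, add_zero] at h
  linear_combination h / 2

lemma even_span : ∀ x : Fin 5 → Fin 2, par x = 0 →
    ∃ b : Fin 4 → Bool, x = (bif b 0 then tt 0 else 0) + (bif b 1 then tt 1 else 0)
      + (bif b 2 then tt 2 else 0) + (bif b 3 then tt 3 else 0) := by decide +kernel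

lemma v_even (v : (Fin 5 → Fin 2) → ℂ) (hstab : ∀ i : Fin 4, (gs i).mulVec v = v)
    (x : Fin 5 → Fin 2) (hx : par x = 0) : ‖v x‖ = ‖v 0‖ := by
  have key : ∀ (b : Bool) (i : Fin 4) (y : Fin 5 → Fin 2),
      ‖v (y + (bif b then tt i else 0))‖ = ‖v y‖ := by
    intro b i y
    cases b
    · simp
    · exact norm_shift v hstab i y
  obtain ⟨b, rfl⟩ := even_span x hx
  rw [key, key, key]
  simpa using key (b 0) 0 0

lemma sum_cube {R : Type*} [AddCommMonoid R] (f : (Fin 5 → Fin 2) → R) :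
    ∑ x, f x = ∑ a, ∑ b, ∑ c, ∑ d, ∑ e, f ![a, b, c, d, e] := by
  have step : ∀ (n : ℕ) (g : (Fin (n + 1) → Fin 2) → R),
      ∑ x, g x = ∑ a, ∑ y, g (Matrix.vecCons a y) := by
    intro n g
    rw [← Fintype.sum_prod_type' (f := fun a y => g (Matrix.vecCons a y))]
    exact (Fintype.sum_equiv (Fin.consEquiv fun _ => Fin 2) _ _ fun _ => rfl).symm
  have hd : ∀ g : (Fin 0 → Fin 2) → R, ∑ x, g x = g ![] := by
    intro g
    rw [Fintype.sum_unique]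
    exact congrArg g (Subsingleton.elim _ _)
  simp only [step, hd]

lemma card_even : ∑ x : Fin 5 → Fin 2, (if par x = 0 then (1:ℤ) else 0) = 16 := by
  rw [sum_cube]
  simp only [Fin.sum_univ_two]
  decide +kernel

lemma v_sq (v : (Fin 5 → Fin 2) → ℂ) (hnorm : star v ⬝ᵥ v = 1)
    (hstab : ∀ i : Fin 4, (gs i).mulVec v = v) (hZ : Zbar.mulVec v = v) (x : Fin 5 → Fin 2) :
    star (v x) * v x = (((if par x = 0 then (1:ℤ) else 0) : ℤ) : ℂ) / 16 := by
  have h0 : ∀ x, star (v x) * v x =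
      (((if par x = 0 then (1:ℤ) else 0) : ℤ) : ℂ) * ((‖v 0‖ ^ 2 : ℝ) : ℂ) := by
    intro x
    by_cases hx : par x = 0
    · rw [if_pos hx, ← v_even v hstab x hx]
      have := Complex.conj_mul' (v x)
      simpa using this
    · rw [if_neg hx, v_odd v hZ x hx]; simp
  have h1 : (16 : ℂ) * ((‖v 0‖ ^ 2 : ℝ) : ℂ) = 1 := by
    rw [← hnorm]
    unfold dotProduct
    simp only [Pi.star_apply, h0]
    rw [← Finset.sum_mul, ← Int.cast_sum, card_even]
    norm_num
  rw [h0]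
  linear_combination (((if par x = 0 then (1:ℤ) else 0) : ℤ) : ℂ) / 16 * h1

/-- The correlation kernel. -/
def KK (k : Fin 5) (a : Fin 2) (e e' : Option (Fin 5)) : ℤ :=
  (if e' = e then 8 else 0) + (if e = none ∧ e' = some k then 8 * sg a else 0)
    + (if e = some k ∧ e' = none then 8 * sg a else 0)

lemma KK_eq : ∀ (k : Fin 5) (a : Fin 2) (e e' : Option (Fin 5)),
    ∑ x : Fin 5 → Fin 2, (if par x = 0 then (1:ℤ) else 0) * (if x k = a then 1 else 0)
      * (ze e x * ze e' x) = KK k a e e' := by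
  simp only [sum_cube, Fin.sum_univ_two]
  decide +kernel

/-- Coefficients. -/
def CC (c : ℝ) (s : Fin 5 → Fin 5 → ℝ) : Option (Fin 5) → Option (Fin 5) → ℂ
  | none, none => c
  | none, some _ => 0
  | some _, none => 0
  | some i, some j => if i ≠ j then (s i j : ℂ) else 0

/-- amplitude factor -/
def ff (c : ℝ) (s : Fin 5 → Fin 5 → ℝ) (x y : Fin 5 → Fin 2) : ℂ :=
  ∑ e, ∑ d, CC c s e d * ((ze e x : ℤ) : ℂ) * ((ze d y : ℤ) : ℂ)

lemma star_ff (c : ℝ) (s : Fin 5 → Fin 5 → ℝ) (x y : Fin 5 → Fin 2) :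
    star (ff c s x y) = ff c s x y := by
  unfold ff
  simp only [star_sum, star_mul']
  refine Finset.sum_congr rfl fun e _ => Finset.sum_congr rfl fun d _ => ?_
  have : star (CC c s e d) = CC c s e d := by
    rcases e with _ | i <;> rcases d with _ | j <;> simp [CC]
    split_ifs <;> simp
  rw [this]; simp

lemma KK_sum (k : Fin 5) (a : Fin 2) (e : Option (Fin 5)) (g : Option (Fin 5) → ℂ) :
    ∑ e', ((KK k a e e' : ℤ) : ℂ) * g e' =
      8 * g e + 8 * sgC a * ((if e = none then g (some k) else 0)
        + (if e = some k then g none else 0)) := by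
  unfold KK sgC
  push_cast
  simp only [add_mul, Finset.sum_add_distrib, ite_mul, zero_mul]
  rw [Finset.sum_ite_eq' Finset.univ e]
  by_cases h1 : e = none
  · subst h1; simp
  · by_cases h2 : e = some k
    · subst h2; simp
    · simp [h1, h2]

lemma CC_KK (c : ℝ) (s : Fin 5 → Fin 5 → ℝ)
    (hcoef : c ^ 2 + ∑ i, ∑ j, (if i ≠ j then s i j ^ 2 else 0) = 1)
    (k : Fin 5) (a b : Fin 2) :
    ∑ e, ∑ d, CC c s e d * ∑ e', ((KK k a e e' : ℤ) : ℂ) *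
      ∑ d', ((KK k b d d' : ℤ) : ℂ) * CC c s e' d' = 64 := by
  have h : (c:ℂ) ^ 2 + ∑ i, ∑ j, (if i ≠ j then (s i j : ℂ) ^ 2 else 0) = 1 := by
    have := congrArg (fun r : ℝ => (r : ℂ)) hcoef
    push_cast at this
    simpa [apply_ite] using this
  have : ∀ e d, CC c s e d * ∑ e', ((KK k a e e' : ℤ) : ℂ) *
      ∑ d', ((KK k b d d' : ℤ) : ℂ) * CC c s e' d' = 64 * CC c s e d ^ 2 := by
    intro e d
    simp only [KK_sum]
    rcases e with _ | i <;> rcases d with _ | j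
    · simp [CC]; ring
    · simp [CC]
    · simp [CC]
    · by_cases hij : i = j
      · simp [CC, hij]
      · have : ¬ (i = k ∧ j = k) := fun h => hij (h.1.trans h.2.symm)
        by_cases hi : i = k <;> by_cases hj : j = k
        · exact absurd ⟨hi, hj⟩ this
        · subst hi; simp [CC, hij, hj]; ring
        · subst hj; simp [CC, hij, hi]; ring
        · simp [CC, hij, hi, hj]; ring
  simp only [this, ← Finset.mul_sum]
  have h64 : ∑ e, ∑ d, CC c s e d ^ 2 = 1 := by
    rw [← h]
    simp only [Fintype.sum_option, CC]
    simp [ite_pow]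
  rw [h64, mul_one]

lemma ff_sum (c : ℝ) (s : Fin 5 → Fin 5 → ℝ)
    (hcoef : c ^ 2 + ∑ i, ∑ j, (if i ≠ j then s i j ^ 2 else 0) = 1)
    (k : Fin 5) (a b : Fin 2) :
    ∑ x : Fin 5 → Fin 2, ∑ y : Fin 5 → Fin 2,
      (((if par x = 0 then (1:ℤ) else 0) * (if x k = a then 1 else 0) : ℤ) : ℂ)
      * (((if par y = 0 then (1:ℤ) else 0) * (if y k = b then 1 else 0) : ℤ) : ℂ)
      * (ff c s x y * ff c s x y) = 64 := by
  rw [← CC_KK c s hcoef k a b]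
  simp only [← KK_eq]
  set A : (Fin 5 → Fin 2) → ℤ := fun x =>
    (if par x = 0 then (1:ℤ) else 0) * (if x k = a then 1 else 0) with hA
  set B : (Fin 5 → Fin 2) → ℤ := fun x =>
    (if par x = 0 then (1:ℤ) else 0) * (if x k = b then 1 else 0) with hB
  have hl : ∀ x y, (A x : ℂ) * (B y : ℂ) * (ff c s x y * ff c s x y) =
      ∑ q : (Option (Fin 5) × Option (Fin 5)) × (Option (Fin 5) × Option (Fin 5)),
        CC c s q.1.1 q.1.2 * CC c s q.2.1 q.2.2 *
        (((A x * (ze q.1.1 x * ze q.2.1 x) : ℤ) : ℂ) *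
          ((B y * (ze q.1.2 y * ze q.2.2 y) : ℤ) : ℂ)) := by
    intro x y
    have hf : ff c s x y = ∑ q : Option (Fin 5) × Option (Fin 5),
        CC c s q.1 q.2 * ((ze q.1 x : ℤ) : ℂ) * ((ze q.2 y : ℤ) : ℂ) := by
      rw [Fintype.sum_prod_type]; rfl
    rw [hf, Finset.sum_mul_sum, ← Fintype.sum_prod_type', Finset.mul_sum]
    refine Finset.sum_congr rfl fun q _ => ?_
    push_cast
    ring
  have hr : ∀ e d, CC c s e d * ∑ e', ((∑ x, A x * (ze e x * ze e' x) : ℤ) : ℂ) *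
      ∑ d', ((∑ y, B y * (ze d y * ze d' y) : ℤ) : ℂ) * CC c s e' d' =
      ∑ q : Option (Fin 5) × Option (Fin 5), ∑ x, ∑ y, CC c s e d * CC c s q.1 q.2 *
        (((A x * (ze e x * ze q.1 x) : ℤ) : ℂ) * ((B y * (ze d y * ze q.2 y) : ℤ) : ℂ)) := by
    intro e d
    rw [Fintype.sum_prod_type, Finset.mul_sum]
    refine Finset.sum_congr rfl fun e' _ => ?_
    rw [Finset.mul_sum, Finset.mul_sum]
    refine Finset.sum_congr rfl fun d' _ => ?_
    simp only [← Finset.mul_sum]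
    rw [← Finset.sum_mul, ← Int.cast_sum, ← Int.cast_sum]
    ring
  have hl' : ∀ x y, (((if par x = 0 then (1:ℤ) else 0) * (if x k = a then 1 else 0) : ℤ) : ℂ)
      * (((if par y = 0 then (1:ℤ) else 0) * (if y k = b then 1 else 0) : ℤ) : ℂ)
      * (ff c s x y * ff c s x y) = _ := hl
  refine Eq.trans ?_ (Finset.sum_congr rfl fun e _ => Finset.sum_congr rfl fun d _ =>
    (hr e d).symm)
  refine (Finset.sum_congr rfl fun x _ => Finset.sum_congr rfl fun y _ => hl' x y).trans ?_
  rw [← Fintype.sum_prod_type' (f := fun e d => ∑ q : Option (Fin 5) × Option (Fin 5),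
    ∑ x, ∑ y, CC c s e d * CC c s q.1 q.2 *
        (((A x * (ze e x * ze q.1 x) : ℤ) : ℂ) * ((B y * (ze d y * ze q.2 y) : ℤ) : ℂ)))]
  rw [← Fintype.sum_prod_type' (f := fun (p q : Option (Fin 5) × Option (Fin 5)) =>
    ∑ x, ∑ y, CC c s p.1 p.2 * CC c s q.1 q.2 *
        (((A x * (ze p.1 x * ze q.1 x) : ℤ) : ℂ) * ((B y * (ze p.2 y * ze q.2 y) : ℤ) : ℂ)))]
  rw [Finset.sum_comm]
  conv_rhs => rw [Finset.sum_comm]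
  rw [Finset.sum_comm]
  refine Finset.sum_congr rfl fun x _ => ?_
  rw [Finset.sum_comm]

lemma par_eq_of_agree : ∀ (k : Fin 5) (x y : Fin 5 → Fin 2), par x = 0 → par y = 0 →
    (∀ l, l ≠ k → x l = y l) → x = y := by
  intro k x y hx hy h
  have h' : ∀ l, l = k ∨ x l = y l := fun l => or_iff_not_imp_left.mpr (h l)
  have h0 := h' 0
  have h1 := h' 1
  have h2 := h' 2
  have h3 := h' 3
  have h4 := h' 4
  unfold par at hx hy
  funext l
  fin_cases k <;> fin_cases l <;> simp at * <;> first | assumption | (simp_all; omega)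

lemma legIns_one (k : Fin 5) : legIns k 1 = 1 := by
  ext p q
  unfold legIns
  by_cases h : p = q
  · subst h; simp
  · rw [Matrix.one_apply_ne h]
    by_cases h1 : (p.1 k, p.2 k) = (q.1 k, q.2 k)
    · rw [if_neg, mul_zero]
      intro h2
      apply h
      rw [Prod.mk.injEq] at h1
      refine Prod.ext (funext fun l => ?_) (funext fun l => ?_)
      · by_cases hl : l = k
        · rw [hl]; exact h1.1
        · exact (h2 l hl).1
      · by_cases hl : l = k
        · rw [hl]; exact h1.2
        · exact (h2 l hl).2
    · rw [Matrix.one_apply_ne h1, zero_mul]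

lemma Psi_apply (v : (Fin 5 → Fin 2) → ℂ) (c : ℝ) (s : Fin 5 → Fin 5 → ℝ)
    (p : (Fin 5 → Fin 2) × (Fin 5 → Fin 2)) :
    ((c : ℂ) • vtens v v
      + ∑ i, ∑ j, if i ≠ j then
          ((s i j : ℂ) • vtens ((Zon i).mulVec v) ((Zon j).mulVec v))
        else 0) p = v p.1 * v p.2 * ff c s p.1 p.2 := by
  unfold ff
  simp only [Fintype.sum_option, CC, Pi.add_apply, Finset.sum_apply, Pi.smul_apply, smul_eq_mul,
    vtens, mul_add, Finset.mul_sum, zero_mul, mul_zero, Finset.sum_const_zero, add_zero,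
    zero_add, ite_apply, Zon_apply]
  congr 1
  · simp [ze]; ring
  · refine Finset.sum_congr rfl fun i _ => Finset.sum_congr rfl fun j _ => ?_
    split_ifs
    · ring
    · simp

lemma leg_main (v : (Fin 5 → Fin 2) → ℂ) (hnorm : star v ⬝ᵥ v = 1)
    (hstab : ∀ i : Fin 4, (gs i).mulVec v = v) (hZ : Zbar.mulVec v = v)
    (c : ℝ) (s : Fin 5 → Fin 5 → ℝ)
    (hcoef : c ^ 2 + ∑ i, ∑ j, (if i ≠ j then s i j ^ 2 else 0) = 1)
    (Ψ : (Fin 5 → Fin 2) × (Fin 5 → Fin 2) → ℂ)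
    (hΨ : ∀ p, Ψ p = v p.1 * v p.2 * ff c s p.1 p.2)
    (k : Fin 5) (M : Matrix (Fin 2 × Fin 2) (Fin 2 × Fin 2) ℂ) :
    star Ψ ⬝ᵥ (legIns k M).mulVec Ψ = M.trace / 4 := by
  have h0 : ∀ p, Ψ p ≠ 0 → par p.1 = 0 ∧ par p.2 = 0 := by
    intro p hp
    rw [hΨ] at hp
    constructor
    · by_contra h; apply hp; rw [v_odd v hZ _ h]; ring
    · by_contra h; apply hp; rw [v_odd v hZ _ h]; ring
  have h1 : ∀ p, star (Ψ p) * (legIns k M).mulVec Ψ p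
      = M (p.1 k, p.2 k) (p.1 k, p.2 k) * (star (Ψ p) * Ψ p) := by
    intro p
    by_cases hp : Ψ p = 0
    · simp [hp]
    obtain ⟨hp1, hp2⟩ := h0 p hp
    have : (legIns k M).mulVec Ψ p = M (p.1 k, p.2 k) (p.1 k, p.2 k) * Ψ p := by
      unfold Matrix.mulVec dotProduct
      rw [Finset.sum_eq_single p]
      · simp [legIns]
      · intro q _ hqp
        by_cases hq : Ψ q = 0
        · simp [hq]
        obtain ⟨hq1, hq2⟩ := h0 q hq
        beta_reduce
        unfold legIns
        beta_reduce
        rw [if_neg, mul_zero, zero_mul]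
        intro h
        apply hqp
        exact (Prod.ext (par_eq_of_agree k _ _ hp1 hq1 fun l hl => (h l hl).1)
          (par_eq_of_agree k _ _ hp2 hq2 fun l hl => (h l hl).2)).symm
      · simp
    rw [this]; ring
  have h2 : ∀ x y, star (Ψ (x, y)) * Ψ (x, y) =
      (((if par x = 0 then (1:ℤ) else 0) : ℤ) : ℂ) / 16 *
      ((((if par y = 0 then (1:ℤ) else 0) : ℤ) : ℂ) / 16) * (ff c s x y * ff c s x y) := by
    intro x y
    rw [← v_sq v hnorm hstab hZ x, ← v_sq v hnorm hstab hZ y, hΨ]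
    simp only [star_mul', star_ff]
    ring
  have h3 : star Ψ ⬝ᵥ (legIns k M).mulVec Ψ =
      ∑ x, ∑ y, ∑ a, ∑ b, M (a, b) (a, b) / 256 *
      ((((if par x = 0 then (1:ℤ) else 0) * (if x k = a then 1 else 0) : ℤ) : ℂ)
      * (((if par y = 0 then (1:ℤ) else 0) * (if y k = b then 1 else 0) : ℤ) : ℂ)
      * (ff c s x y * ff c s x y)) := by
    unfold dotProduct
    simp only [Pi.star_apply, h1]
    rw [Fintype.sum_prod_type]
    refine Finset.sum_congr rfl fun x _ => Finset.sum_congr rfl fun y _ => ?_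
    rw [Finset.sum_eq_single (x k), Finset.sum_eq_single (y k)]
    · rw [h2]; simp only [if_true, mul_one]; ring
    · intro b _ hb
      rw [if_neg (c := y k = b) (Ne.symm hb)]; simp
    · simp
    · intro a _ ha
      rw [if_neg (c := x k = a) (Ne.symm ha)]; simp
    · simp
  have h4 : ∀ F : (Fin 5 → Fin 2) → (Fin 5 → Fin 2) → Fin 2 → Fin 2 → ℂ,
      ∑ x, ∑ y, ∑ a, ∑ b, F x y a b = ∑ a, ∑ b, ∑ x, ∑ y, F x y a b := by
    intro F
    simp only [Fin.sum_univ_two, Finset.sum_add_distrib]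
  rw [h3, h4]
  simp only [← Finset.mul_sum, ff_sum c s hcoef k]
  unfold Matrix.trace
  simp only [Fintype.sum_prod_type, Matrix.diag_apply, Fin.sum_univ_two]
  ring

/-- the imperfect tensor
`Ψ = cos θ · v ⊗ v + Σ_{i≠j} s_{ij} · (Z_i v) ⊗ (Z_j v)` built from the logical-zero
state `v` of the five-qubit code, with `cos²θ + Σ_{i≠j} s_{ij}² = 1`, is a unit
vector whose reduced density matrix on each of its five dimension-4 legs is
maximally mixed: `⟨Ψ, M̃ Ψ⟩ = Tr(M)/4` for every insertion `M̃` of a `4×4` matrix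
`M` on a leg. -/
theorem stmt9 (v : (Fin 5 → Fin 2) → ℂ) (hnorm : star v ⬝ᵥ v = 1)
    (hstab : ∀ i : Fin 4, (gs i).mulVec v = v) (hZ : Zbar.mulVec v = v)
    (θ : ℝ) (s : Fin 5 → Fin 5 → ℝ)
    (hcoef : Real.cos θ ^ 2 + ∑ i, ∑ j, (if i ≠ j then s i j ^ 2 else 0) = 1)
    (Ψ : (Fin 5 → Fin 2) × (Fin 5 → Fin 2) → ℂ)
    (hΨ : Ψ = (Real.cos θ : ℂ) • vtens v v
      + ∑ i, ∑ j, if i ≠ j then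
          ((s i j : ℂ) • vtens ((Zon i).mulVec v) ((Zon j).mulVec v))
        else 0) :
    star Ψ ⬝ᵥ Ψ = 1
    ∧ ∀ (k : Fin 5) (M : Matrix (Fin 2 × Fin 2) (Fin 2 × Fin 2) ℂ),
        star Ψ ⬝ᵥ (legIns k M).mulVec Ψ = M.trace / 4 := by
  have hp : ∀ p, Ψ p = v p.1 * v p.2 * ff (Real.cos θ) s p.1 p.2 := by
    intro p
    rw [hΨ]
    exact Psi_apply v (Real.cos θ) s p
  have key := leg_main v hnorm hstab hZ (Real.cos θ) s hcoef Ψ hp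
  refine ⟨?_, key⟩
  have h := key 0 1
  rw [legIns_one, Matrix.one_mulVec] at h
  rw [h, Matrix.trace_one]
  simp
end
end
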